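/- arXiv:2602.12671 — 2 statements merged into one kernel-verified Lean document; each statement's English description precedes it below -/
import Mathlib

section
/- Let (T, Δ₋₁, Δ₀, Δ₁, α) be a multiplicative Hom-tridendriform coalgebra over a field of characteristic 0. Define γ = (1 − τ)∘Δ₀ and Δ✻ = Δ₁ − τ∘Δ₋₁, where τ is the flip of T⊗T. Then (T, γ, Δ✻, α) is a post-Hom-Lie coalgebra. -/
open TensorProduct

noncomputable section

variable {F : Type*} [Field F] [CharZero F]
variable {C : Type*} [AddCommGroup C] [Module F C]

/-- The flip `τ : x ⊗ y ↦ y ⊗ x` on `C ⊗ C`. -/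
def tw : C ⊗[F] C →ₗ[F] C ⊗[F] C := (TensorProduct.comm F C C).toLinearMap

/-- `(f ⊗ g)` (followed by the associator), for `f : C → C ⊗ C`, `g : C → C`. -/
def rT (f : C →ₗ[F] C ⊗[F] C) (g : C →ₗ[F] C) :
    C ⊗[F] C →ₗ[F] C ⊗[F] (C ⊗[F] C) :=
  (TensorProduct.assoc F C C C).toLinearMap ∘ₗ TensorProduct.map f g

/-- `(g ⊗ f)` for `g : C → C`, `f : C → C ⊗ C`. -/
def lT (g : C →ₗ[F] C) (f : C →ₗ[F] C ⊗[F] C) :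
    C ⊗[F] C →ₗ[F] C ⊗[F] (C ⊗[F] C) :=
  TensorProduct.map g f

/-- `τ ⊗ I` acting on `C ⊗ (C ⊗ C)` (swap of the first two factors). -/
def sw12 : C ⊗[F] (C ⊗[F] C) →ₗ[F] C ⊗[F] (C ⊗[F] C) :=
  (TensorProduct.assoc F C C C).toLinearMap ∘ₗ
    TensorProduct.map (tw : C ⊗[F] C →ₗ[F] C ⊗[F] C) (LinearMap.id : C →ₗ[F] C) ∘ₗ
    (TensorProduct.assoc F C C C).symm.toLinearMap

/-- The cyclic permutation `ξ : x ⊗ y ⊗ z ↦ y ⊗ z ⊗ x` on `C ⊗ (C ⊗ C)`. -/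
def cyc : C ⊗[F] (C ⊗[F] C) →ₗ[F] C ⊗[F] (C ⊗[F] C) :=
  TensorProduct.map (LinearMap.id : C →ₗ[F] C) (tw : C ⊗[F] C →ₗ[F] C ⊗[F] C) ∘ₗ sw12

/-- Hom-tridendriform coalgebra axioms for `(C, Δ₋₁, Δ₀, Δ₁, α)`. -/
def IsHomTridendriformCoalgebra (Δm Δ0 Δp : C →ₗ[F] C ⊗[F] C) (α : C →ₗ[F] C) : Prop :=
  (rT Δm α ∘ₗ Δm = lT α (Δm + Δ0 + Δp) ∘ₗ Δm) ∧
  (rT Δp α ∘ₗ Δm = lT α Δm ∘ₗ Δp) ∧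
  (lT α Δp ∘ₗ Δp = rT (Δm + Δ0 + Δp) α ∘ₗ Δp) ∧
  (rT Δm α ∘ₗ Δ0 = lT α Δp ∘ₗ Δ0) ∧
  (rT Δp α ∘ₗ Δ0 = lT α Δ0 ∘ₗ Δp) ∧
  (rT Δ0 α ∘ₗ Δm = lT α Δm ∘ₗ Δ0) ∧
  (rT Δ0 α ∘ₗ Δ0 = lT α Δ0 ∘ₗ Δ0)

/-- Hom-Lie coalgebra axioms for `(C, γ, α)`: skew-cocommutativity,
comultiplicativity, and the Hom-co-Jacobi identity. -/
def IsHomLieCoalgebra (γ : C →ₗ[F] C ⊗[F] C) (α : C →ₗ[F] C) : Prop :=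
  (γ = -(tw ∘ₗ γ)) ∧
  (γ ∘ₗ α = TensorProduct.map α α ∘ₗ γ) ∧
  ((LinearMap.id + cyc + cyc ∘ₗ cyc) ∘ₗ (lT α γ ∘ₗ γ) = 0)

/-- Post-Hom-Lie coalgebra axioms for `(C, γ, Δ, α)`. -/
def IsPostHomLieCoalgebra (γ Δ : C →ₗ[F] C ⊗[F] C) (α : C →ₗ[F] C) : Prop :=
  IsHomLieCoalgebra γ α ∧
  (lT α γ ∘ₗ Δ - rT Δ α ∘ₗ γ - sw12 ∘ₗ (lT α Δ ∘ₗ γ) = 0) ∧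
  (rT Δ α ∘ₗ Δ - lT α Δ ∘ₗ Δ - sw12 ∘ₗ (rT Δ α ∘ₗ Δ) +
    sw12 ∘ₗ (lT α Δ ∘ₗ Δ) + rT γ α ∘ₗ Δ = 0)

/-!
Write `ξ = cyc` and `σ = sw12`, so that `ξ³ = σ² = 1` and `σξ = ξ²σ`. Moving every flip outwards
turns each composite of maps `f - τ f'` into a combination of flip-free composites permuted by `ξ`
and `σ`, and in this form each post-Hom-Lie axiom is a formal cancellation:

* Hom-co-Jacobi: with `A = (Δ₀ ⊗ α) Δ₀ = (α ⊗ Δ₀) Δ₀`, the double cobracket `(α ⊗ γ) γ` is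
  `(1 - ξ²) A + (ξ² - ξ) σ A`, which `1 + ξ + ξ²` annihilates.
* Compatibility of `γ` with `Δ✻`: the three axioms mixing `Δ₀` with `Δ₋₁` and `Δ₁` express all its
  terms as permutations of `(α ⊗ Δ₁) Δ₀`, `(α ⊗ Δ₀) Δ₁` and `(α ⊗ Δ₋₁) Δ₀`.
* The last axiom says that antisymmetrizing the Hom-coassociator of `Δ✻` under `σ` yields
  `-(γ ⊗ α) Δ✻`. By the three remaining tridendriform axioms, this coassociator is a `σ`-invariant
  term minus `(Δ₀ ⊗ α) Δ₁ + σξ (α ⊗ Δ₀) Δ₋₁`, whose antisymmetrization is `(γ ⊗ α) Δ✻`.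
-/

section General

variable {K : Type*} [Field K] {V : Type*} [AddCommGroup V] [Module K V]

@[simp]
theorem tw_tw (x : V ⊗[K] V) : tw (tw x) = x :=
  TensorProduct.comm_comm K V V x

@[simp]
theorem sw12_sw12 (x : V ⊗[K] (V ⊗[K] V)) : sw12 (sw12 x) = x := by
  simp [sw12, tw, ← LinearMap.comp_apply, ← TensorProduct.map_comp]

@[simp]
theorem cyc_cyc_cyc (x : V ⊗[K] (V ⊗[K] V)) : cyc (cyc (cyc x)) = x := by
  have h : (cyc ∘ₗ cyc ∘ₗ cyc : V ⊗[K] (V ⊗[K] V) →ₗ[K] _) = LinearMap.id := by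
    ext a b c
    simp [cyc, sw12, tw]
  exact LinearMap.congr_fun h x

theorem sw12_cyc (x : V ⊗[K] (V ⊗[K] V)) : sw12 (cyc x) = cyc (cyc (sw12 x)) := by
  have h : (sw12 ∘ₗ cyc : V ⊗[K] (V ⊗[K] V) →ₗ[K] _) = cyc ∘ₗ cyc ∘ₗ sw12 := by
    ext a b c
    simp [cyc, sw12, tw]
  exact LinearMap.congr_fun h x

theorem cyc_sw12 (x : V ⊗[K] (V ⊗[K] V)) :
    cyc (sw12 x) = TensorProduct.map LinearMap.id tw x := by
  simp [cyc]

theorem cyc_cyc_assoc (x : (V ⊗[K] V) ⊗[K] V) :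
    cyc (cyc (TensorProduct.assoc K V V V x)) = TensorProduct.comm K (V ⊗[K] V) V x := by
  have h : cyc ∘ₗ cyc ∘ₗ (TensorProduct.assoc K V V V).toLinearMap =
      (TensorProduct.comm K (V ⊗[K] V) V).toLinearMap := by
    ext a b c
    simp [cyc, sw12, tw]
  exact LinearMap.congr_fun h x

theorem tw_map (f : V →ₗ[K] V) (x : V ⊗[K] V) :
    tw (TensorProduct.map f f x) = TensorProduct.map f f (tw x) :=
  (TensorProduct.map_comm f f x).symm

section Composites

variable (f f' : V →ₗ[K] V ⊗[K] V) (α : V →ₗ[K] V) (x y : V ⊗[K] V)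

theorem lT_add : lT α (f + f') x = lT α f x + lT α f' x := by
  simp [lT, TensorProduct.map_add_right]

theorem rT_add : rT (f + f') α x = rT f α x + rT f' α x := by
  simp [rT, TensorProduct.map_add_left]

theorem lT_sub : lT α (f - f') x = lT α f x - lT α f' x := by
  rw [eq_sub_iff_add_eq, ← lT_add, sub_add_cancel]

theorem rT_sub : rT (f - f') α x = rT f α x - rT f' α x := by
  rw [eq_sub_iff_add_eq, ← rT_add, sub_add_cancel]

theorem lT_tw : lT α f (tw x) = cyc (cyc (rT f α x)) := by
  simp [lT, rT, tw, cyc_cyc_assoc, TensorProduct.map_comm]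

theorem rT_tw : rT f α (tw x) = cyc (lT α f x) := by
  rw [← cyc_cyc_cyc (rT f α (tw x)), ← lT_tw, tw_tw]

theorem lT_tw_comp : lT α (tw ∘ₗ f) x = cyc (sw12 (lT α f x)) := by
  rw [cyc_sw12, lT, lT, ← LinearMap.comp_apply, ← TensorProduct.map_comp, LinearMap.id_comp]

theorem rT_tw_comp : rT (tw ∘ₗ f) α x = sw12 (rT f α x) := by
  simp [rT, sw12, ← LinearMap.comp_apply, ← TensorProduct.map_comp]

theorem lT_sub_tw_comp_sub_tw :
    lT α (f - tw ∘ₗ f') (x - tw y) =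
      lT α f x - cyc (sw12 (lT α f' x)) - cyc (cyc (rT f α y)) +
        cyc (cyc (sw12 (rT f' α y))) := by
  simp only [map_sub, lT_tw, lT_sub, lT_tw_comp, rT_sub, rT_tw_comp]
  abel

theorem rT_sub_tw_comp_sub_tw :
    rT (f - tw ∘ₗ f') α (x - tw y) =
      rT f α x - sw12 (rT f' α x) - cyc (lT α f y) + cyc (cyc (sw12 (lT α f' y))) := by
  simp only [map_sub, rT_tw, rT_sub, rT_tw_comp, lT_sub, lT_tw_comp]
  abel

end Composites

section PostHomLie

variable {Δ Δm Δ0 Δp : V →ₗ[K] V ⊗[K] V} {α : V →ₗ[K] V}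

theorem sub_tw_comp_eq_neg_tw_comp (Δ : V →ₗ[K] V ⊗[K] V) :
    Δ - tw ∘ₗ Δ = -(tw ∘ₗ (Δ - tw ∘ₗ Δ)) := by
  ext x
  simp

theorem sub_tw_comp_comp_eq_map_comp (hα : Δ ∘ₗ α = TensorProduct.map α α ∘ₗ Δ) :
    (Δ - tw ∘ₗ Δ) ∘ₗ α = TensorProduct.map α α ∘ₗ (Δ - tw ∘ₗ Δ) := by
  ext x
  have hαx : Δ (α x) = TensorProduct.map α α (Δ x) := LinearMap.congr_fun hα x
  simp [hαx, tw_map]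

theorem homCoJacobi_sub_tw_comp (hcoassoc : rT Δ α ∘ₗ Δ = lT α Δ ∘ₗ Δ) :
    (LinearMap.id + cyc + cyc ∘ₗ cyc) ∘ₗ (lT α (Δ - tw ∘ₗ Δ) ∘ₗ (Δ - tw ∘ₗ Δ)) = 0 := by
  ext x
  set A := lT α Δ (Δ x)
  have hA : rT Δ α (Δ x) = A := LinearMap.congr_fun hcoassoc x
  have double_cobracket : lT α (Δ - tw ∘ₗ Δ) ((Δ - tw ∘ₗ Δ) x) =
      A - cyc (sw12 A) - cyc (cyc A) + cyc (cyc (sw12 A)) := by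
    rw [LinearMap.sub_apply, LinearMap.comp_apply, lT_sub_tw_comp_sub_tw, hA]
  simp only [LinearMap.comp_apply, LinearMap.add_apply, LinearMap.id_apply, LinearMap.zero_apply,
    double_cobracket, map_add, map_sub, cyc_cyc_cyc]
  abel

theorem isHomLieCoalgebra_sub_tw_comp (hcoassoc : rT Δ α ∘ₗ Δ = lT α Δ ∘ₗ Δ)
    (hα : Δ ∘ₗ α = TensorProduct.map α α ∘ₗ Δ) :
    IsHomLieCoalgebra (Δ - tw ∘ₗ Δ) α :=
  ⟨sub_tw_comp_eq_neg_tw_comp Δ, sub_tw_comp_comp_eq_map_comp hα,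
    homCoJacobi_sub_tw_comp hcoassoc⟩

theorem cobracket_compatibility_sub_tw_comp (hm0 : rT Δm α ∘ₗ Δ0 = lT α Δp ∘ₗ Δ0)
    (hp0 : rT Δp α ∘ₗ Δ0 = lT α Δ0 ∘ₗ Δp) (h0m : rT Δ0 α ∘ₗ Δm = lT α Δm ∘ₗ Δ0) :
    lT α (Δ0 - tw ∘ₗ Δ0) ∘ₗ (Δp - tw ∘ₗ Δm) - rT (Δp - tw ∘ₗ Δm) α ∘ₗ (Δ0 - tw ∘ₗ Δ0) -
      sw12 ∘ₗ (lT α (Δp - tw ∘ₗ Δm) ∘ₗ (Δ0 - tw ∘ₗ Δ0)) = 0 := by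
  ext x
  set A := lT α Δp (Δ0 x)
  set B := lT α Δ0 (Δp x)
  set D := lT α Δm (Δ0 x)
  have hA : rT Δm α (Δ0 x) = A := LinearMap.congr_fun hm0 x
  have hB : rT Δp α (Δ0 x) = B := LinearMap.congr_fun hp0 x
  have hD : rT Δ0 α (Δm x) = D := LinearMap.congr_fun h0m x
  have coaction_cobracket : lT α (Δ0 - tw ∘ₗ Δ0) ((Δp - tw ∘ₗ Δm) x) =
      B - cyc (sw12 B) - cyc (cyc D) + cyc (cyc (sw12 D)) := by
    rw [LinearMap.sub_apply, LinearMap.comp_apply, lT_sub_tw_comp_sub_tw, hD]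
  have cobracket_left : rT (Δp - tw ∘ₗ Δm) α ((Δ0 - tw ∘ₗ Δ0) x) =
      B - sw12 A - cyc A + cyc (cyc (sw12 D)) := by
    rw [LinearMap.sub_apply, LinearMap.comp_apply, rT_sub_tw_comp_sub_tw, hA, hB]
  have cobracket_right : sw12 (lT α (Δp - tw ∘ₗ Δm) ((Δ0 - tw ∘ₗ Δ0) x)) =
      sw12 A - cyc (cyc D) - cyc (sw12 B) + cyc A := by
    rw [LinearMap.sub_apply, LinearMap.comp_apply, lT_sub_tw_comp_sub_tw, hA, hB]
    simp only [map_add, map_sub, sw12_cyc, sw12_sw12, cyc_cyc_cyc, A, D]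
  set γ := Δ0 - tw ∘ₗ Δ0
  set Δ := Δp - tw ∘ₗ Δm
  simp only [LinearMap.sub_apply, LinearMap.comp_apply, LinearMap.zero_apply, coaction_cobracket,
    cobracket_left, cobracket_right]
  abel

theorem homCoassociator_sub_tw_comp (hmm : rT Δm α ∘ₗ Δm = lT α (Δm + Δ0 + Δp) ∘ₗ Δm)
    (hpm : rT Δp α ∘ₗ Δm = lT α Δm ∘ₗ Δp) (hpp : lT α Δp ∘ₗ Δp = rT (Δm + Δ0 + Δp) α ∘ₗ Δp)
    (x : V) :
    rT (Δp - tw ∘ₗ Δm) α ((Δp - tw ∘ₗ Δm) x) - lT α (Δp - tw ∘ₗ Δm) ((Δp - tw ∘ₗ Δm) x) =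
      (cyc (cyc (lT α Δm (Δp x))) + sw12 (cyc (cyc (lT α Δm (Δp x))))) -
        (rT Δm α (Δp x) + sw12 (rT Δm α (Δp x))) -
        (cyc (lT α Δp (Δm x)) + sw12 (cyc (lT α Δp (Δm x)))) -
        (rT Δ0 α (Δp x) + sw12 (cyc (lT α Δ0 (Δm x)))) := by
  have hmmx : rT Δm α (Δm x) = lT α Δm (Δm x) + lT α Δ0 (Δm x) + lT α Δp (Δm x) := by
    simpa only [LinearMap.comp_apply, lT_add] using LinearMap.congr_fun hmm x
  have hpmx : rT Δp α (Δm x) = lT α Δm (Δp x) := LinearMap.congr_fun hpm x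
  have hppx : lT α Δp (Δp x) = rT Δm α (Δp x) + rT Δ0 α (Δp x) + rT Δp α (Δp x) := by
    simpa only [LinearMap.comp_apply, rT_add] using LinearMap.congr_fun hpp x
  rw [LinearMap.sub_apply, LinearMap.comp_apply, rT_sub_tw_comp_sub_tw, lT_sub_tw_comp_sub_tw,
    hmmx, hpmx, hppx]
  simp only [map_add, sw12_cyc, cyc_cyc_cyc]
  abel

theorem homCoassociator_antisymmetrization_sub_tw_comp
    (hmm : rT Δm α ∘ₗ Δm = lT α (Δm + Δ0 + Δp) ∘ₗ Δm)
    (hpm : rT Δp α ∘ₗ Δm = lT α Δm ∘ₗ Δp) (hpp : lT α Δp ∘ₗ Δp = rT (Δm + Δ0 + Δp) α ∘ₗ Δp) :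
    rT (Δp - tw ∘ₗ Δm) α ∘ₗ (Δp - tw ∘ₗ Δm) - lT α (Δp - tw ∘ₗ Δm) ∘ₗ (Δp - tw ∘ₗ Δm) -
      sw12 ∘ₗ (rT (Δp - tw ∘ₗ Δm) α ∘ₗ (Δp - tw ∘ₗ Δm)) +
      sw12 ∘ₗ (lT α (Δp - tw ∘ₗ Δm) ∘ₗ (Δp - tw ∘ₗ Δm)) +
      rT (Δ0 - tw ∘ₗ Δ0) α ∘ₗ (Δp - tw ∘ₗ Δm) = 0 := by
  ext x
  have coassociator := homCoassociator_sub_tw_comp hmm hpm hpp x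
  have cobracket : rT (Δ0 - tw ∘ₗ Δ0) α ((Δp - tw ∘ₗ Δm) x) =
      rT Δ0 α (Δp x) - sw12 (rT Δ0 α (Δp x)) - cyc (lT α Δ0 (Δm x)) +
        sw12 (cyc (lT α Δ0 (Δm x))) := by
    rw [LinearMap.sub_apply, LinearMap.comp_apply, rT_sub_tw_comp_sub_tw, sw12_cyc]
  set Δ := Δp - tw ∘ₗ Δm
  calc
    _ = (rT Δ α (Δ x) - lT α Δ (Δ x)) - sw12 (rT Δ α (Δ x) - lT α Δ (Δ x)) +
          rT (Δ0 - tw ∘ₗ Δ0) α (Δ x) := by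
      simp only [LinearMap.add_apply, LinearMap.sub_apply, LinearMap.comp_apply, map_sub]
      abel
    _ = 0 := by
      rw [coassociator, cobracket]
      simp only [map_add, map_sub, sw12_sw12]
      abel

end PostHomLie

theorem homTridendriform_postHomLieCoalgebra_general
    (Δm Δ0 Δp : V →ₗ[K] V ⊗[K] V) (α : V →ₗ[K] V)
    (h : IsHomTridendriformCoalgebra Δm Δ0 Δp α)
    (hmult0 : Δ0 ∘ₗ α = TensorProduct.map α α ∘ₗ Δ0) :
    IsPostHomLieCoalgebra (Δ0 - tw ∘ₗ Δ0) (Δp - tw ∘ₗ Δm) α := by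
  obtain ⟨hmm, hpm, hpp, hm0, hp0, h0m, h00⟩ := h
  exact ⟨isHomLieCoalgebra_sub_tw_comp h00 hmult0,
    cobracket_compatibility_sub_tw_comp hm0 hp0 h0m,
    homCoassociator_antisymmetrization_sub_tw_comp hmm hpm hpp⟩

end General

/-- A multiplicative Hom-tridendriform coalgebra `(T, Δ₋₁, Δ₀, Δ₁, α)` yields a
post-Hom-Lie coalgebra with `γ = (1 - τ) ∘ Δ₀` and `Δ✻ = Δ₁ - τ ∘ Δ₋₁`. -/
theorem homTridendriform_postHomLieCoalgebra
    (Δm Δ0 Δp : C →ₗ[F] C ⊗[F] C) (α : C →ₗ[F] C)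
    (h : IsHomTridendriformCoalgebra Δm Δ0 Δp α)
    (hmultm : Δm ∘ₗ α = TensorProduct.map α α ∘ₗ Δm)
    (hmult0 : Δ0 ∘ₗ α = TensorProduct.map α α ∘ₗ Δ0)
    (hmultp : Δp ∘ₗ α = TensorProduct.map α α ∘ₗ Δp) :
    IsPostHomLieCoalgebra (Δ0 - tw ∘ₗ Δ0) (Δp - tw ∘ₗ Δm) α := by
  exact homTridendriform_postHomLieCoalgebra_general Δm Δ0 Δp α h hmult0
end
end

section
/- Let (M, Δ_⋄, Δ_•, α_M) be a comodule over a multiplicative post-Hom-Lie coalgebra (L, γ, Δ, α) over a field of characteristic 0. For any natural number n define Δ_⋄⁽ⁿ⁾ = (αⁿ⊗Id_M)∘Δ_⋄ : M → L⊗M and Δ_•⁽ⁿ⁾ = (αⁿ⊗Id_M)∘Δ_• : M → L⊗M. Then (M, Δ_⋄⁽ⁿ⁾, Δ_•⁽ⁿ⁾, α_M) is again a comodule over (L, γ, Δ, α). -/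
open TensorProduct

noncomputable section

variable {F : Type*} [Field F] [CharZero F]
variable {C : Type*} [AddCommGroup C] [Module F C]

variable {M : Type*} [AddCommGroup M] [Module F M]

/-- `(f ⊗ g)` (followed by the associator) for `f : C → C ⊗ C`, `g : M → M`. -/
def rTM (f : C →ₗ[F] C ⊗[F] C) (g : M →ₗ[F] M) :
    C ⊗[F] M →ₗ[F] C ⊗[F] (C ⊗[F] M) :=
  (TensorProduct.assoc F C C M).toLinearMap ∘ₗ TensorProduct.map f g

/-- `(g ⊗ f)` for `g : C → C`, `f : M → C ⊗ M`. -/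
def lTM (g : C →ₗ[F] C) (f : M →ₗ[F] C ⊗[F] M) :
    C ⊗[F] M →ₗ[F] C ⊗[F] (C ⊗[F] M) :=
  TensorProduct.map g f

/-- `τ ⊗ Id_M` acting on `C ⊗ (C ⊗ M)` (swap of the two `C`-factors). -/
def sw12M : C ⊗[F] (C ⊗[F] M) →ₗ[F] C ⊗[F] (C ⊗[F] M) :=
  (TensorProduct.assoc F C C M).toLinearMap ∘ₗ
    TensorProduct.map (tw : C ⊗[F] C →ₗ[F] C ⊗[F] C) (LinearMap.id : M →ₗ[F] M) ∘ₗ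
    (TensorProduct.assoc F C C M).symm.toLinearMap

/-- Comodule axioms over a post-Hom-Lie coalgebra `(C, γ, Δ, α)`, with structure
maps `Dd = Δ_⋄` and `Db = Δ_•`. -/
def IsPostHomLieComodule (γ Δ : C →ₗ[F] C ⊗[F] C) (α : C →ₗ[F] C)
    (Dd Db : M →ₗ[F] C ⊗[F] M) (αM : M →ₗ[F] M) : Prop :=
  (Dd ∘ₗ αM = TensorProduct.map α αM ∘ₗ Dd) ∧
  (Db ∘ₗ αM = TensorProduct.map α αM ∘ₗ Db) ∧
  (rTM γ αM ∘ₗ Dd = lTM α Dd ∘ₗ Dd - sw12M ∘ₗ (lTM α Dd ∘ₗ Dd)) ∧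
  (rTM Δ αM ∘ₗ Dd = lTM α Dd ∘ₗ Db - sw12M ∘ₗ (lTM α Db ∘ₗ Db)) ∧
  (rTM γ αM ∘ₗ Db =
    (lTM α Db ∘ₗ Db - sw12M ∘ₗ (lTM α Db ∘ₗ Db)) +
    (sw12M ∘ₗ (rTM Δ αM ∘ₗ Db) - rTM Δ αM ∘ₗ Db))

/-!
Call `(β ⊗ id) ∘ D` the twist of a coaction `D` by `β`. When `β` commutes with `α` and is
compatible with `γ` and `Δ`, twisting the coactions multiplies every term of the last three comodule
axioms on the left by the same map `β ⊗ β ⊗ id`, which commutes with the flip of the two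
coalgebra legs. So each of these axioms for the twists is `β ⊗ β ⊗ id` applied to the original one.
The powers `β = αⁿ` qualify.
-/

section Twist

variable {R L N : Type*} [CommSemiring R] [AddCommMonoid L] [AddCommMonoid N]
  [Module R L] [Module R N]

/-- The twist `(β ⊗ Id) ∘ D` of a coaction `D : N → L ⊗ N` by an endomorphism `β` of `L`; for
`β = αⁿ` it is the coaction written `D⁽ⁿ⁾` in the theorem. -/
def twistCoaction (β : L →ₗ[R] L) (D : N →ₗ[R] L ⊗[R] N) : N →ₗ[R] L ⊗[R] N :=
  TensorProduct.map β LinearMap.id ∘ₗ D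

theorem twistCoaction_comp_eq_map_comp {α β : L →ₗ[R] L} {φ : N →ₗ[R] N} {D : N →ₗ[R] L ⊗[R] N}
    (hαβ : Commute α β) (hD : D ∘ₗ φ = TensorProduct.map α φ ∘ₗ D) :
    twistCoaction β D ∘ₗ φ = TensorProduct.map α φ ∘ₗ twistCoaction β D := by
  have hcomp : α ∘ₗ β = β ∘ₗ α := hαβ.eq
  simp only [twistCoaction, LinearMap.comp_assoc, hD]
  simp only [← LinearMap.comp_assoc, ← TensorProduct.map_comp, hcomp, LinearMap.id_comp,
    LinearMap.comp_id]

theorem comp_pow_eq_map_pow_comp {f : L →ₗ[R] L ⊗[R] L} {α : L →ₗ[R] L}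
    (hf : f ∘ₗ α = TensorProduct.map α α ∘ₗ f) (n : ℕ) :
    f ∘ₗ (α ^ n) = TensorProduct.map (α ^ n) (α ^ n) ∘ₗ f := by
  rw [← TensorProduct.map_pow]
  exact (Module.End.commute_pow_left_of_commute hf.symm n).symm

end Twist

section Comodule

variable {K L N : Type*} [Field K] [AddCommGroup L] [AddCommGroup N] [Module K L] [Module K N]

theorem sw12M_comp_map_map (β₁ β₂ : L →ₗ[K] L) (φ : N →ₗ[K] N) :
    sw12M ∘ₗ TensorProduct.map β₁ (TensorProduct.map β₂ φ) =
      TensorProduct.map β₂ (TensorProduct.map β₁ φ) ∘ₗ sw12M := by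
  ext x y m
  simp [sw12M, tw]

theorem sw12M_comp_map_map_comp {V : Type*} [AddCommMonoid V] [Module K V]
    (β : L →ₗ[K] L) (φ : N →ₗ[K] N) (T : V →ₗ[K] L ⊗[K] (L ⊗[K] N)) :
    sw12M ∘ₗ TensorProduct.map β (TensorProduct.map β φ) ∘ₗ T =
      TensorProduct.map β (TensorProduct.map β φ) ∘ₗ sw12M ∘ₗ T := by
  rw [← LinearMap.comp_assoc, sw12M_comp_map_map, LinearMap.comp_assoc]

theorem rTM_comp_twistCoaction {f : L →ₗ[K] L ⊗[K] L} {β : L →ₗ[K] L}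
    (hf : f ∘ₗ β = TensorProduct.map β β ∘ₗ f) (φ : N →ₗ[K] N) (D : N →ₗ[K] L ⊗[K] N) :
    rTM f φ ∘ₗ twistCoaction β D =
      TensorProduct.map β (TensorProduct.map β LinearMap.id) ∘ₗ rTM f φ ∘ₗ D := by
  have hmap : TensorProduct.map f φ ∘ₗ TensorProduct.map β LinearMap.id =
      TensorProduct.map (TensorProduct.map β β) LinearMap.id ∘ₗ TensorProduct.map f φ := by
    simp only [← TensorProduct.map_comp, hf, LinearMap.comp_id, LinearMap.id_comp]
  simp only [rTM, twistCoaction, LinearMap.comp_assoc]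
  rw [← LinearMap.comp_assoc D, hmap, LinearMap.comp_assoc, ← LinearMap.comp_assoc,
    ← TensorProduct.map_map_comp_assoc_eq, LinearMap.comp_assoc]

theorem lTM_twistCoaction_comp_twistCoaction {α β : L →ₗ[K] L} (hαβ : Commute α β)
    (D D' : N →ₗ[K] L ⊗[K] N) :
    lTM α (twistCoaction β D) ∘ₗ twistCoaction β D' =
      TensorProduct.map β (TensorProduct.map β LinearMap.id) ∘ₗ lTM α D ∘ₗ D' := by
  have hcomp : α ∘ₗ β = β ∘ₗ α := hαβ.eq
  simp only [lTM, twistCoaction, ← LinearMap.comp_assoc, ← TensorProduct.map_comp, hcomp,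
    LinearMap.comp_id]

theorem postHomLieComodule_twist_pow_general
    {γ Δ : L →ₗ[K] L ⊗[K] L} {α β : L →ₗ[K] L}
    {Dd Db : N →ₗ[K] L ⊗[K] N} {αM : N →ₗ[K] N}
    (hαβ : Commute α β)
    (hγ : γ ∘ₗ β = TensorProduct.map β β ∘ₗ γ)
    (hΔ : Δ ∘ₗ β = TensorProduct.map β β ∘ₗ Δ)
    (hM : IsPostHomLieComodule γ Δ α Dd Db αM) :
    IsPostHomLieComodule γ Δ α (twistCoaction β Dd) (twistCoaction β Db) αM := by
  obtain ⟨hDd, hDb, hγDd, hΔDd, hγDb⟩ := hM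
  refine ⟨twistCoaction_comp_eq_map_comp hαβ hDd, twistCoaction_comp_eq_map_comp hαβ hDb,
    ?_, ?_, ?_⟩
  · simp only [rTM_comp_twistCoaction hγ, lTM_twistCoaction_comp_twistCoaction hαβ,
      sw12M_comp_map_map_comp, hγDd, LinearMap.comp_sub]
  · simp only [rTM_comp_twistCoaction hΔ, lTM_twistCoaction_comp_twistCoaction hαβ,
      sw12M_comp_map_map_comp, hΔDd, LinearMap.comp_sub]
  · simp only [rTM_comp_twistCoaction hγ, rTM_comp_twistCoaction hΔ,
      lTM_twistCoaction_comp_twistCoaction hαβ, sw12M_comp_map_map_comp, hγDb,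
      LinearMap.comp_add, LinearMap.comp_sub]

end Comodule

/-- Twisting the structure maps of a comodule over a multiplicative post-Hom-Lie
coalgebra by `α^n ⊗ Id_M` gives again a comodule. -/
theorem postHomLieComodule_twist_pow
    (γ Δ : C →ₗ[F] C ⊗[F] C) (α : C →ₗ[F] C)
    (Dd Db : M →ₗ[F] C ⊗[F] M) (αM : M →ₗ[F] M)
    (h : IsPostHomLieCoalgebra γ Δ α)
    (hmult : Δ ∘ₗ α = TensorProduct.map α α ∘ₗ Δ)
    (hM : IsPostHomLieComodule γ Δ α Dd Db αM) (n : ℕ) :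
    IsPostHomLieComodule γ Δ α
      (TensorProduct.map (α ^ n) (LinearMap.id : M →ₗ[F] M) ∘ₗ Dd)
      (TensorProduct.map (α ^ n) (LinearMap.id : M →ₗ[F] M) ∘ₗ Db) αM := by
  exact postHomLieComodule_twist_pow_general (Commute.self_pow α n)
    (comp_pow_eq_map_pow_comp h.1.2.1 n) (comp_pow_eq_map_pow_comp hmult n) hM
end
end
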